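/- (Proposition 4.5.) Let F be the logistic function, θ ∈ ℝ, δ_1,…,δ_k ∈ ℝ. Let μ be a probability measure on {0,1}^k concentrated on the Guttman space Ω^G, assigning positive probability to every Guttman vector, and suppose its coordinate projections Y^{(1)},…,Y^{(k)} satisfy μ(Y^{(r)} = 1 | Y^{(r−1)} = 1, Y^{(r+1)} = 0) = F(θ − δ_r) for all r = 1,…,k, with the conventions Y^{(0)} ≡ 1 and Y^{(k+1)} ≡ 0. Then the sum Y = Y^{(1)} + … + Y^{(k)} follows the partial credit model with parameters θ, δ_1,…,δ_k. -/

import Mathlib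

open scoped Classical

/-- The logistic function `F(x) = exp x / (1 + exp x)`. -/
noncomputable def logistic (x : ℝ) : ℝ := Real.exp x / (1 + Real.exp x)

/-- A vector in `{0,1}^k` is a Guttman vector if its coordinates are nonincreasing,
i.e. it has the form `(1,…,1,0,…,0)`. -/
def IsGuttman {k : ℕ} (y : Fin k → Bool) : Prop :=
  ∀ i j : Fin k, i ≤ j → y j = true → y i = true

/-- The sum `Y = Y⁽¹⁾ + … + Y⁽ᵏ⁾` of the binary coordinates. -/
def gsum {k : ℕ} (y : Fin k → Bool) : ℕ :=
  ∑ i : Fin k, if y i then 1 else 0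

/-- The `r`-th coordinate `Y⁽ʳ⁾` of `y ∈ {0,1}^k` (for `1 ≤ r ≤ k`), with the
conventions `Y⁽⁰⁾ ≡ 1` and `Y⁽ʳ⁾ ≡ 0` for `r > k`. -/
def coordExt {k : ℕ} (y : Fin k → Bool) (r : ℕ) : Bool :=
  if h0 : r = 0 then true
  else if h : r ≤ k then y ⟨r - 1, by omega⟩ else false

/-- The probability mass function of the partial credit model (PCM) with person
parameter `θ` and item parameters `δ 1, …, δ k`. -/
noncomputable def pcmPMF (k : ℕ) (θ : ℝ) (δ : ℕ → ℝ) (r : ℕ) : ℝ :=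
  Real.exp (∑ l ∈ Finset.Icc 1 r, (θ - δ l)) /
    ∑ s ∈ Finset.range (k + 1), Real.exp (∑ l ∈ Finset.Icc 1 s, (θ - δ l))

/-- The Guttman vector with `s` leading ones. -/
def gvec (k s : ℕ) : Fin k → Bool := fun i => decide (i.val < s)

lemma gvec_guttman (k s : ℕ) : IsGuttman (gvec k s) := by
  intro i j hij h
  simp only [gvec, decide_eq_true_eq] at *
  have : i.val ≤ j.val := hij
  omega

lemma guttman_eq {k : ℕ} (y : Fin k → Bool) (hy : IsGuttman y) :
    ∃ s ∈ Finset.range (k + 1), gvec k s = y := by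
  have hex : ∃ s : ℕ, ∀ i : Fin k, y i = true → i.val < s := ⟨k, fun i _ => i.2⟩
  refine ⟨Nat.find hex, ?_, ?_⟩
  · have := Nat.find_min' hex (m := k) (fun i _ => i.2)
    simp only [Finset.mem_range]
    omega
  · funext i
    rw [Bool.eq_iff_iff]
    simp only [gvec, decide_eq_true_eq]
    constructor
    · intro h
      have h2 := Nat.find_min hex h
      push Not at h2
      obtain ⟨j, hj, hij⟩ := h2
      exact hy i j hij hj
    · exact Nat.find_spec hex i

lemma gsum_gvec {k s : ℕ} (hs : s ≤ k) : gsum (gvec k s) = s := by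
  unfold gsum gvec
  simp only [decide_eq_true_eq]
  rw [Fin.sum_univ_eq_sum_range (fun i => if i < s then 1 else 0) k]
  rw [← Finset.sum_filter, Finset.sum_const, smul_eq_mul, mul_one]
  have : (Finset.range k).filter (fun i => i < s) = Finset.range s := by
    ext i
    simp only [Finset.mem_filter, Finset.mem_range]
    omega
  rw [this, Finset.card_range]

lemma coordExt_gvec {k s : ℕ} (hs : s ≤ k) (r : ℕ) :
    coordExt (gvec k s) r = decide (r ≤ s) := by
  unfold coordExt gvec
  rw [Bool.eq_iff_iff]
  split_ifs with h0 h
  · simp [h0]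
  · simp only [decide_eq_true_eq]
    omega
  · simp only [decide_eq_true_eq, false_iff]
    omega

lemma sum_guttman {k : ℕ} (μ : (Fin k → Bool) → ℝ)
    (hconc : ∀ y, ¬ IsGuttman y → μ y = 0) (P : (Fin k → Bool) → Prop) [DecidablePred P] :
    ∑ y ∈ Finset.univ.filter P, μ y
      = ∑ s ∈ (Finset.range (k + 1)).filter (fun s => P (gvec k s)), μ (gvec k s) := by
  rw [← Finset.sum_image (f := μ) (g := gvec k)]
  · symm
    apply Finset.sum_subset
    · intro y hy
      simp only [Finset.mem_image, Finset.mem_filter] at hy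
      obtain ⟨s, ⟨_, hP⟩, rfl⟩ := hy
      simp [hP]
    · intro y hy hn
      apply hconc
      intro hG
      obtain ⟨s, hs, rfl⟩ := guttman_eq y hG
      exact hn (Finset.mem_image.2 ⟨s, Finset.mem_filter.2 ⟨hs, (Finset.mem_filter.1 hy).2⟩, rfl⟩)
  · intro a ha b hb hab
    have ha1 := (Finset.mem_filter.1 ha).1
    have hb1 := (Finset.mem_filter.1 hb).1
    rw [Finset.mem_range] at ha1 hb1
    rw [← gsum_gvec (k := k) (s := a) (by omega), ← gsum_gvec (k := k) (s := b) (by omega)]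
    exact congrArg gsum hab

/-- Proposition 4.5: if a probability measure `μ` on `{0,1}^k` is
concentrated on the Guttman space, gives positive probability to every Guttman
vector, and satisfies `μ(Y⁽ʳ⁾ = 1 | Y⁽ʳ⁻¹⁾ = 1, Y⁽ʳ⁺¹⁾ = 0) = F(θ - δ r)` for
`r = 1,…,k` (conventions `Y⁽⁰⁾ ≡ 1`, `Y⁽ᵏ⁺¹⁾ ≡ 0`), then the sum `Y` follows the
partial credit model with parameters `θ, δ 1, …, δ k`. -/
theorem pcm_from_guttman_conditional_rasch
    (k : ℕ) (θ : ℝ) (δ : ℕ → ℝ) (μ : (Fin k → Bool) → ℝ)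
    (hnn : ∀ y, 0 ≤ μ y) (hsum : ∑ y, μ y = 1)
    (hconc : ∀ y, ¬ IsGuttman y → μ y = 0)
    (hpos : ∀ y, IsGuttman y → 0 < μ y)
    (hrasch : ∀ r ∈ Finset.Icc 1 k,
      (∑ y ∈ Finset.univ.filter
          (fun y : Fin k → Bool =>
            coordExt y r = true ∧ coordExt y (r - 1) = true ∧ coordExt y (r + 1) = false),
          μ y) /
        (∑ y ∈ Finset.univ.filter
          (fun y : Fin k → Bool =>
            coordExt y (r - 1) = true ∧ coordExt y (r + 1) = false), μ y)
        = logistic (θ - δ r)) :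
    ∀ r ≤ k,
      (∑ y ∈ Finset.univ.filter (fun y : Fin k → Bool => gsum y = r), μ y)
        = pcmPMF k θ δ r := by
  have hstep : ∀ r, r + 1 ≤ k →
      μ (gvec k (r + 1)) = μ (gvec k r) * Real.exp (θ - δ (r + 1)) := by
    intro r hr
    have h := hrasch (r + 1) (Finset.mem_Icc.2 ⟨by omega, hr⟩)
    rw [sum_guttman μ hconc, sum_guttman μ hconc] at h
    have e1 : (Finset.range (k + 1)).filter (fun s => coordExt (gvec k s) (r + 1) = true ∧
        coordExt (gvec k s) (r + 1 - 1) = true ∧ coordExt (gvec k s) (r + 1 + 1) = false)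
        = {r + 1} := by
      ext s
      simp only [Finset.mem_filter, Finset.mem_range, Finset.mem_singleton]
      constructor
      · rintro ⟨hs, h1, h2, h3⟩
        rw [coordExt_gvec (by omega)] at h1 h2 h3
        simp only [decide_eq_true_eq, decide_eq_false_iff_not] at h1 h2 h3
        omega
      · rintro rfl
        rw [coordExt_gvec hr, coordExt_gvec hr, coordExt_gvec hr]
        simp only [decide_eq_true_eq, decide_eq_false_iff_not]
        omega
    have e2 : (Finset.range (k + 1)).filter (fun s =>
        coordExt (gvec k s) (r + 1 - 1) = true ∧ coordExt (gvec k s) (r + 1 + 1) = false)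
        = {r, r + 1} := by
      ext s
      simp only [Finset.mem_filter, Finset.mem_range, Finset.mem_singleton, Finset.mem_insert]
      constructor
      · rintro ⟨hs, h2, h3⟩
        rw [coordExt_gvec (by omega)] at h2 h3
        simp only [decide_eq_true_eq, decide_eq_false_iff_not] at h2 h3
        omega
      · intro hs
        rw [coordExt_gvec (by omega), coordExt_gvec (by omega)]
        simp only [decide_eq_true_eq, decide_eq_false_iff_not]
        omega
    rw [e1, e2, Finset.sum_singleton, Finset.sum_pair (by omega), logistic] at h
    have p1 := hpos _ (gvec_guttman k r)
    have p2 := hpos _ (gvec_guttman k (r + 1))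
    have p3 := Real.exp_pos (θ - δ (r + 1))
    rw [div_eq_div_iff (by positivity) (by positivity)] at h
    linarith
  have hform : ∀ r, r ≤ k →
      μ (gvec k r) = μ (gvec k 0) * Real.exp (∑ l ∈ Finset.Icc 1 r, (θ - δ l)) := by
    intro r
    induction r with
    | zero => intro _; simp
    | succ n ih =>
      intro hn
      rw [hstep n hn, ih (by omega), Finset.sum_Icc_succ_top (by omega), Real.exp_add]
      ring
  have htot : ∑ s ∈ Finset.range (k + 1), μ (gvec k s) = 1 := by
    have h := sum_guttman μ hconc (fun _ => True)
    simp only [Finset.filter_true] at h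
    rw [← h, hsum]
  have htot2 : μ (gvec k 0) *
      ∑ s ∈ Finset.range (k + 1), Real.exp (∑ l ∈ Finset.Icc 1 s, (θ - δ l)) = 1 := by
    rw [← htot, Finset.mul_sum]
    apply Finset.sum_congr rfl
    intro s hs
    rw [Finset.mem_range] at hs
    exact (hform s (by omega)).symm
  intro r hr
  rw [sum_guttman μ hconc]
  have e3 : (Finset.range (k + 1)).filter (fun s => gsum (gvec k s) = r) = {r} := by
    ext s
    simp only [Finset.mem_filter, Finset.mem_range, Finset.mem_singleton]
    constructor
    · rintro ⟨hs, h1⟩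
      rw [gsum_gvec (by omega)] at h1
      exact h1
    · rintro rfl
      exact ⟨by omega, gsum_gvec hr⟩
  rw [e3, Finset.sum_singleton, hform r hr, pcmPMF]
  have hS : (∑ s ∈ Finset.range (k + 1), Real.exp (∑ l ∈ Finset.Icc 1 s, (θ - δ l))) ≠ 0 := by
    intro h0
    rw [h0, mul_zero] at htot2
    exact zero_ne_one htot2
  rw [eq_div_iff hS]
  linear_combination Real.exp (∑ l ∈ Finset.Icc 1 r, (θ - δ l)) * htot2
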